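/- arXiv:1412.3025 — 5 statements merged into one kernel-verified Lean document; each statement's English description precedes it below -/
import Mathlib

section
/- Let (M,E,η) be a factorable monoid satisfying the stronger conditions η′(x·s) = η′(η′(x)·s) and η̄(x·s) = η̄(x)·η̄(η′(x)·s) for all x ∈ M and s ∈ E. Then the rewriting system associated with η is complete (in particular, it is noetherian). -/
/-- The word length of `m` with respect to the generating set `E`:
the least `n` such that `m` is a product of `n` elements of `E`. -/
noncomputable def wordLength {M : Type*} [Monoid M] (E : Set M) (m : M) : ℕ :=
  sInf {n | ∃ l : List M, (∀ x ∈ l, x ∈ E) ∧ l.length = n ∧ l.prod = m}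

/-- `E` is a generating set of the monoid `M`. -/
def IsGenSet {M : Type*} [Monoid M] (E : Set M) : Prop :=
  ∀ m : M, ∃ l : List M, (∀ x ∈ l, x ∈ E) ∧ l.prod = m

/-- The pair `(a, b)` is geodesic with respect to `E`. -/
noncomputable def Geodesic {M : Type*} [Monoid M] (E : Set M) (a b : M) : Prop :=
  wordLength E (a * b) = wordLength E a + wordLength E b

/-- A factorization map `η = (η̄, η′)` on `(M, E)`. -/
noncomputable def IsFactorizationMap {M : Type*} [Monoid M] (E : Set M)
    (η : M → M × M) : Prop :=
  (∀ m, (η m).1 * (η m).2 = m) ∧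
  (∀ m, wordLength E m = wordLength E (η m).1 + wordLength E (η m).2) ∧
  (∀ m, m ≠ 1 → (η m).2 ∈ E) ∧
  η 1 = (1, 1)

/-- The map `f₁ : M³ → M³` applying `η` to the product of the two right entries,
with triples written `(x₃, x₂, x₁)`. -/
def f1 {M : Type*} [Monoid M] (η : M → M × M) (p : M × M × M) : M × M × M :=
  (p.1, η (p.2.1 * p.2.2))

/-- The map `f₂ : M³ → M³` applying `η` to the product of the two left entries. -/
def f2 {M : Type*} [Monoid M] (η : M → M × M) (p : M × M × M) : M × M × M :=
  ((η (p.1 * p.2.1)).1, (η (p.1 * p.2.1)).2, p.2.2)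

/-- The sum of the word lengths of the entries of a triple. -/
noncomputable def tnorm {M : Type*} [Monoid M] (E : Set M) (p : M × M × M) : ℕ :=
  wordLength E p.1 + wordLength E p.2.1 + wordLength E p.2.2

/-- `η` is a factorability structure on `(M, E)`: it is a factorization map and the
three maps `f₁f₂f₁f₂`, `f₂f₁f₂`, `f₂f₁f₂f₁ : M³ → M³` are equal in the graded sense. -/
noncomputable def IsFactorable {M : Type*} [Monoid M] (E : Set M) (η : M → M × M) : Prop :=
  IsFactorizationMap E η ∧
  ∀ p : M × M × M,
    (f1 η (f2 η (f1 η (f2 η p))) = f2 η (f1 η (f2 η p)) ∧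
     f2 η (f1 η (f2 η p)) = f2 η (f1 η (f2 η (f1 η p)))) ∨
    (tnorm E (f1 η (f2 η (f1 η (f2 η p)))) < tnorm E p ∧
     tnorm E (f2 η (f1 η (f2 η p))) < tnorm E p ∧
     tnorm E (f2 η (f1 η (f2 η (f1 η p)))) < tnorm E p)

/-- `η` is a weak factorability structure on `(M, E)`. -/
noncomputable def IsWeaklyFactorable {M : Type*} [Monoid M] (E : Set M)
    (η : M → M × M) : Prop :=
  IsFactorizationMap E η ∧
  ∀ x : M, ∀ t ∈ E,
    Geodesic E (η x).2 t →
    Geodesic E (η x).1 (η ((η x).2 * t)).1 →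
    Geodesic E x t ∧
    (η (x * t)).2 = (η ((η x).2 * t)).2 ∧
    (η (x * t)).1 = (η x).1 * (η ((η x).2 * t)).1

/-- `η` satisfies the recognition principle. -/
def RecognitionPrinciple {M : Type*} [Monoid M] (E : Set M) (η : M → M × M) : Prop :=
  ∀ m : M, ∀ a ∈ E, (η (m * a) = (m, a) ↔ η ((η m).2 * a) = ((η m).2, a))


attribute [local instance] Classical.propDecidable

/-- The right-hand side of the rewriting rule associated with the unstable pair `(x, y)`:
the word obtained from the pair `(η̄(x·y), η′(x·y))` by deleting entries equal to `1`. -/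
noncomputable def ruleRHS {M : Type*} [Monoid M] (η : M → M × M) (x y : M) : List M :=
  (if (η (x * y)).1 = 1 then [] else [(η (x * y)).1]) ++
  (if (η (x * y)).2 = 1 then [] else [(η (x * y)).2])

/-- One rewriting step of the rewriting system associated with the factorability
structure `η` on `(M, E)`: some occurrence of an unstable pair `(x, y)` of generators is
replaced by the corresponding right-hand side. -/
noncomputable def Step {M : Type*} [Monoid M] (E : Set M) (η : M → M × M)
    (w z : List M) : Prop :=
  ∃ (u v : List M) (x y : M), x ∈ E ∧ y ∈ E ∧ η (x * y) ≠ (x, y) ∧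
    w = u ++ [x, y] ++ v ∧ z = u ++ ruleRHS η x y ++ v

/-- A word is irreducible if no rewriting rule applies to it. -/
noncomputable def Irr {M : Type*} [Monoid M] (E : Set M) (η : M → M × M)
    (w : List M) : Prop :=
  ¬ ∃ z, Step E η w z

/-- The rewriting system associated with `η` is strongly minimal: every single letter is
irreducible, the right side of every rule is irreducible, and the left side of every
rule is irreducible with respect to the remaining rules. -/
noncomputable def StronglyMinimal {M : Type*} [Monoid M] (E : Set M)
    (η : M → M × M) : Prop :=
  (∀ s ∈ E, Irr E η [s]) ∧
  (∀ x ∈ E, ∀ y ∈ E, η (x * y) ≠ (x, y) → Irr E η (ruleRHS η x y)) ∧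
  (∀ x ∈ E, ∀ y ∈ E, η (x * y) ≠ (x, y) →
    ¬ ∃ (u v : List M) (x' y' : M), x' ∈ E ∧ y' ∈ E ∧ η (x' * y') ≠ (x', y') ∧
        (x', y') ≠ (x, y) ∧ [x, y] = u ++ [x', y'] ++ v)

/-- The rewriting system associated with `η` is noetherian: there is no infinite chain
of rewriting steps between words over the alphabet `E`. -/
noncomputable def Noetherian {M : Type*} [Monoid M] (E : Set M)
    (η : M → M × M) : Prop :=
  ¬ ∃ f : ℕ → List M, (∀ k, ∀ a ∈ f k, a ∈ E) ∧ ∀ k, Step E η (f k) (f (k + 1))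

/-- The rewriting system associated with `η` is convergent: it is noetherian and each
`↔`-equivalence class of words over `E` contains exactly one irreducible word. -/
noncomputable def Convergent {M : Type*} [Monoid M] (E : Set M)
    (η : M → M × M) : Prop :=
  Noetherian E η ∧
  ∀ w : List M, (∀ a ∈ w, a ∈ E) →
    ∃! z : List M, (∀ a ∈ z, a ∈ E) ∧ Relation.EqvGen (Step E η) w z ∧ Irr E η z

/-- The rewriting system associated with `η` is complete. -/
noncomputable def Complete {M : Type*} [Monoid M] (E : Set M) (η : M → M × M) : Prop :=
  StronglyMinimal E η ∧ Convergent E η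

section StrongFactorable

variable {M : Type*} [Monoid M] {E : Set M} {η : M → M × M}

/-- The strong compatibility of `η` with right multiplication by generators. -/
def IsStrong (E : Set M) (η : M → M × M) : Prop :=
  ∀ x : M, ∀ s ∈ E,
    (η (x * s)).2 = (η ((η x).2 * s)).2 ∧
    (η (x * s)).1 = (η x).1 * (η ((η x).2 * s)).1

theorem wordLength_prod_le {l : List M} (hl : ∀ x ∈ l, x ∈ E) :
    wordLength E l.prod ≤ l.length :=
  Nat.sInf_le ⟨l, hl, rfl, rfl⟩

theorem exists_list_length_eq_wordLength (hgen : IsGenSet E) (m : M) :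
    ∃ l : List M, (∀ x ∈ l, x ∈ E) ∧ l.length = wordLength E m ∧ l.prod = m := by
  obtain ⟨l, hl, hm⟩ := hgen m
  exact Nat.sInf_mem
    (s := {n | ∃ l : List M, (∀ x ∈ l, x ∈ E) ∧ l.length = n ∧ l.prod = m})
    ⟨l.length, l, hl, rfl, hm⟩

theorem eq_one_of_wordLength_eq_zero (hgen : IsGenSet E) {m : M}
    (h : wordLength E m = 0) : m = 1 := by
  obtain ⟨l, -, hlen, hm⟩ := exists_list_length_eq_wordLength hgen m
  rw [h, List.length_eq_zero_iff] at hlen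
  simpa [hlen] using hm.symm

theorem wordLength_of_mem (h1 : (1 : M) ∉ E) (hgen : IsGenSet E) {s : M} (hs : s ∈ E) :
    wordLength E s = 1 := by
  have hle : wordLength E s ≤ 1 := by
    simpa using wordLength_prod_le (E := E) (l := [s]) (by simpa using hs)
  have hne : wordLength E s ≠ 0 := fun h =>
    h1 (eq_one_of_wordLength_eq_zero hgen h ▸ hs)
  omega

theorem eq_one_or_mem_of_wordLength_le_one (hgen : IsGenSet E) {m : M}
    (h : wordLength E m ≤ 1) : m = 1 ∨ m ∈ E := by
  obtain ⟨l, hl, hlen, hm⟩ := exists_list_length_eq_wordLength hgen m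
  rw [← hlen] at h
  match l, hl, h, hm with
  | [], _, _, hm => exact Or.inl (by simpa using hm.symm)
  | [a], hl, _, hm =>
    have ha : a ∈ E := hl a (by simp)
    exact Or.inr (by simpa [← hm] using ha)

theorem eta_of_mem (h1 : (1 : M) ∉ E) (hgen : IsGenSet E) (hη : IsFactorizationMap E η)
    {s : M} (hs : s ∈ E) : η s = (1, s) := by
  obtain ⟨hmul, hlen, hmem, -⟩ := hη
  have hs1 : s ≠ 1 := fun h => h1 (h ▸ hs)
  have hl := hlen s
  rw [wordLength_of_mem h1 hgen hs, wordLength_of_mem h1 hgen (hmem s hs1)] at hl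
  have hfst : (η s).1 = 1 := eq_one_of_wordLength_eq_zero hgen (by omega)
  have hsnd := hmul s
  rw [hfst, one_mul] at hsnd
  exact Prod.ext hfst hsnd

theorem eta_mul_fst_eq_one_or_mem (h1 : (1 : M) ∉ E) (hgen : IsGenSet E)
    (hη : IsFactorizationMap E η) {x y : M} (hx : x ∈ E) (hy : y ∈ E) :
    (η (x * y)).1 = 1 ∨ (η (x * y)).1 ∈ E := by
  by_cases hxy : x * y = 1
  · left
    rw [hxy, hη.2.2.2]
  · apply eq_one_or_mem_of_wordLength_le_one hgen
    have hle : wordLength E (x * y) ≤ 2 := by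
      simpa using wordLength_prod_le (E := E) (l := [x, y]) (by simp [hx, hy])
    have hl := hη.2.1 (x * y)
    rw [wordLength_of_mem h1 hgen (hη.2.2.1 _ hxy)] at hl
    omega

theorem eta_snd_eq_one_or_mem (hη : IsFactorizationMap E η) (m : M) :
    (η m).2 = 1 ∨ (η m).2 ∈ E := by
  by_cases hm : m = 1
  · left
    rw [hm, hη.2.2.2]
  · exact Or.inr (hη.2.2.1 m hm)

theorem IsStrong.snd_mul_prod (hs : IsStrong E η) (x : M) (l : List M)
    (hl : ∀ a ∈ l, a ∈ E) (hη : IsFactorizationMap E η) (h1 : (1 : M) ∉ E)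
    (hgen : IsGenSet E) :
    (η (x * l.prod)).2 = (η ((η x).2 * l.prod)).2 := by
  induction l using List.reverseRecOn with
  | nil =>
    rcases eta_snd_eq_one_or_mem hη x with h | h
    · simp [h, hη.2.2.2]
    · simp [eta_of_mem h1 hgen hη h]
  | append_singleton l s ih =>
    have hsE : s ∈ E := hl s (by simp)
    have ih := ih fun a ha => hl a (by simp [ha])
    rw [List.prod_append, List.prod_singleton, ← mul_assoc, ← mul_assoc,
      (hs _ s hsE).1, ih, ← (hs _ s hsE).1]

theorem IsStrong.stable_mul (hs : IsStrong E η) (hη : IsFactorizationMap E η) {q e : M}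
    (he : e ∈ E) (h : η ((η q).2 * e) = ((η q).2, e)) : η (q * e) = (q, e) := by
  obtain ⟨hsnd, hfst⟩ := hs q e he
  rw [h] at hsnd hfst
  exact Prod.ext (hfst.trans (hη.1 q)) hsnd

theorem IsStrong.stable_snd_mul (hs : IsStrong E η) (hfac : IsFactorable E η) {q e : M}
    (he : e ∈ E) (h : η (q * e) = (q, e)) : η ((η q).2 * e) = ((η q).2, e) := by
  obtain ⟨hη, htri⟩ := hfac
  obtain ⟨-, hfst⟩ := hs q e he
  rw [h] at hfst
  have hf2 : f2 η ((η q).1, (η q).2, e) = ((η q).1, (η q).2, e) := by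
    simp [f2, hη.1 q]
  have hf21 : f2 η (f1 η ((η q).1, (η q).2, e)) = ((η q).1, (η q).2, e) := by
    have hsnd := (hs q e he).1
    rw [h] at hsnd
    simp only [f1, f2, ← hfst, ← hsnd]
  have key := htri ((η q).1, (η q).2, e)
  rw [hf2, hf21] at key
  rcases key with ⟨h₁, -⟩ | ⟨-, h₂, -⟩
  · exact congrArg Prod.snd h₁
  · exact absurd h₂ (lt_irrefl _)

/-- The letter `x` is settled after the word `u` if it is split off by `η` from the product of
every suffix of `u` with `x`. -/
def Settled (η : M → M × M) (u : List M) (x : M) : Prop :=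
  ∀ s, s <:+ u → η (s.prod * x) = (s.prod, x)

theorem settled_nil (h1 : (1 : M) ∉ E) (hgen : IsGenSet E) (hη : IsFactorizationMap E η)
    {x : M} (hx : x ∈ E) : Settled η [] x := by
  intro s hs
  rw [List.suffix_nil.1 hs]
  simpa using eta_of_mem h1 hgen hη hx

theorem not_settled_of_unstable {x y : M} (hxy : η (x * y) ≠ (x, y)) (u : List M) :
    ¬ Settled η (u ++ [x]) y := fun h =>
  hxy (by simpa using h [x] (List.suffix_append u [x]))

theorem Settled.step (h1 : (1 : M) ∉ E) (hgen : IsGenSet E) (hη : IsFactorizationMap E η)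
    (hs : IsStrong E η) {u : List M} {x y : M} (hy : y ∈ E) (hb : (η (x * y)).2 ∈ E)
    (h : Settled η u x) : Settled η (u ++ [(η (x * y)).1]) (η (x * y)).2 := by
  intro s hsu
  rcases List.suffix_concat_iff.1 hsu with rfl | ⟨t, rfl, ht⟩
  · simpa using eta_of_mem h1 hgen hη hb
  · have hx := h t ht
    obtain ⟨hsnd, hfst⟩ := hs (t.prod * x) y hy
    rw [hx] at hsnd hfst
    have hprod : (t ++ [(η (x * y)).1]).prod * (η (x * y)).2 = t.prod * x * y := by
      simp [mul_assoc, hη.1]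
    rw [hprod]
    exact Prod.ext (by simpa using hfst) hsnd

theorem Settled.of_step_before (h1 : (1 : M) ∉ E) (hgen : IsGenSet E)
    (hfac : IsFactorable E η) (hs : IsStrong E η) {u t : List M} {x y z : M} (hz : z ∈ E)
    (ht : ∀ a ∈ t, a ∈ E) (h : Settled η (u ++ [x, y] ++ t) z) :
    Settled η (u ++ [(η (x * y)).1, (η (x * y)).2] ++ t) z := by
  have hη := hfac.1
  intro s hsu
  obtain ⟨k, hk⟩ := hsu
  rcases List.append_eq_append_iff.1 hk with ⟨r, hr, rfl⟩ | ⟨r, -, rfl⟩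
  swap
  · exact h s ((List.suffix_append r s).trans (List.suffix_append _ _))
  replace hr : r <:+ u ++ [(η (x * y)).1, (η (x * y)).2] := ⟨k, hr.symm⟩
  rw [show u ++ [(η (x * y)).1, (η (x * y)).2] = (u ++ [(η (x * y)).1]) ++ [(η (x * y)).2] by
    simp] at hr
  rcases List.suffix_concat_iff.1 hr with rfl | ⟨r, rfl, hra⟩
  · exact h _ (List.suffix_append _ _)
  rcases List.suffix_concat_iff.1 hra with rfl | ⟨r, rfl, hru⟩
  · have hxy : η (x * y * t.prod * z) = (x * y * t.prod, z) := by
      simpa [mul_assoc] using h ([x, y] ++ t) (by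
        rw [List.append_assoc]; exact List.suffix_append _ _)
    have hst := hs.stable_snd_mul hfac hz hxy
    rw [hs.snd_mul_prod (x * y) t ht hη h1 hgen] at hst
    simpa using hs.stable_mul hη hz hst
  · have hr' : r ++ [x, y] ++ t <:+ u ++ [x, y] ++ t := by
      obtain ⟨c, rfl⟩ := hru
      exact ⟨c, by simp⟩
    have hprod : (r ++ [(η (x * y)).1] ++ [(η (x * y)).2] ++ t).prod
        = (r ++ [x, y] ++ t).prod := by
      simp only [List.prod_append, List.prod_cons, List.prod_nil, mul_one]
      rw [mul_assoc r.prod, hη.1]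
    rw [hprod]
    exact h _ hr'

/-- The weighted number of letters of `v` that are not settled in the word `u ++ v`. -/
noncomputable def unsettledWeight (η : M → M × M) : List M → List M → ℕ
  | _, [] => 0
  | u, x :: v => (if Settled η u x then 0 else 2 ^ u.length) + unsettledWeight η (u ++ [x]) v

theorem unsettledWeight_append (u v w : List M) :
    unsettledWeight η u (v ++ w) = unsettledWeight η u v + unsettledWeight η (u ++ v) w := by
  induction v generalizing u with
  | nil => simp [unsettledWeight]
  | cons x v ih => simp [unsettledWeight, ih, add_assoc]

theorem unsettledWeight_add_le (u v : List M) :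
    unsettledWeight η u v + 2 ^ u.length ≤ 2 ^ (u.length + v.length) := by
  induction v generalizing u with
  | nil => simp [unsettledWeight]
  | cons x v ih =>
    have := ih (u ++ [x])
    simp only [List.length_append, List.length_cons, List.length_nil, zero_add] at this
    rw [unsettledWeight, List.length_cons, show u.length + (v.length + 1)
      = u.length + 1 + v.length by ring]
    rw [pow_succ] at this
    split_ifs <;> omega

theorem unsettledWeight_le_of_step_before (h1 : (1 : M) ∉ E) (hgen : IsGenSet E)
    (hfac : IsFactorable E η) (hs : IsStrong E η) {u t v : List M} {x y : M}
    (ht : ∀ a ∈ t, a ∈ E) (hv : ∀ a ∈ v, a ∈ E) :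
    unsettledWeight η (u ++ [(η (x * y)).1, (η (x * y)).2] ++ t) v
      ≤ unsettledWeight η (u ++ [x, y] ++ t) v := by
  induction v generalizing t with
  | nil => simp [unsettledWeight]
  | cons z v ih =>
    have hz : z ∈ E := hv z (by simp)
    have ih := ih (t := t ++ [z]) (by
      intro a ha
      rcases List.mem_append.1 ha with ha | ha
      · exact ht a ha
      · rwa [List.mem_singleton.1 ha]) fun a ha => hv a (by simp [ha])
    rw [← List.append_assoc, ← List.append_assoc] at ih
    have hle : (if Settled η (u ++ [(η (x * y)).1, (η (x * y)).2] ++ t) z then 0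
          else 2 ^ (u ++ [(η (x * y)).1, (η (x * y)).2] ++ t).length)
        ≤ (if Settled η (u ++ [x, y] ++ t) z then 0 else 2 ^ (u ++ [x, y] ++ t).length) := by
      by_cases hset : Settled η (u ++ [x, y] ++ t) z
      · rw [if_pos (hset.of_step_before h1 hgen hfac hs hz ht)]
        exact Nat.zero_le _
      · rw [if_neg hset]
        split_ifs <;> simp
    exact Nat.add_le_add hle ih

theorem unsettledWeight_step (h1 : (1 : M) ∉ E) (hgen : IsGenSet E)
    (hfac : IsFactorable E η) (hs : IsStrong E η) {u v : List M} {x y : M}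
    (hy : y ∈ E) (hv : ∀ a ∈ v, a ∈ E) (hb : (η (x * y)).2 ∈ E) (hxy : η (x * y) ≠ (x, y)) :
    unsettledWeight η [] (u ++ [(η (x * y)).1, (η (x * y)).2] ++ v)
      ≤ unsettledWeight η [] (u ++ [x, y] ++ v) ∧
    (Settled η u x → unsettledWeight η [] (u ++ [(η (x * y)).1, (η (x * y)).2] ++ v)
      < unsettledWeight η [] (u ++ [x, y] ++ v)) := by
  have hle := unsettledWeight_le_of_step_before (u := u) (t := []) (x := x) (y := y)
    h1 hgen hfac hs (by simp) hv
  have hpos : 0 < 2 ^ u.length := by positivity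
  simp only [List.append_nil] at hle
  simp only [unsettledWeight_append, List.nil_append, unsettledWeight, List.length_append,
    List.length_singleton, pow_succ, if_neg (not_settled_of_unstable hxy u), add_zero]
  by_cases hset : Settled η u x
  · rw [if_pos hset, if_pos (hset.step h1 hgen hfac.1 hs hy hb)]
    constructor
    · split_ifs <;> omega
    · intro
      split_ifs <;> omega
  · rw [if_neg hset]
    refine ⟨?_, fun h => absurd h hset⟩
    split_ifs <;> omega

/-- A strict upper bound for `rewritingRank` on words of length `n`. -/
def rankBound : ℕ → ℕ
  | 0 => 1
  | n + 1 => 2 ^ (n + 1) * rankBound n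

/-- A termination measure for length-preserving rewriting steps, encoding lexicographically
the unsettled weights of all suffixes of a word. -/
noncomputable def rewritingRank (η : M → M × M) : List M → ℕ
  | [] => 0
  | x :: l => unsettledWeight η [] (x :: l) * rankBound l.length + rewritingRank η l

theorem rewritingRank_lt (l : List M) : rewritingRank η l < rankBound l.length := by
  induction l with
  | nil => simp [rewritingRank, rankBound]
  | cons x l ih =>
    have h := unsettledWeight_add_le (η := η) [] (x :: l)
    simp only [List.length_nil, pow_zero, zero_add, List.length_cons] at h
    rw [rewritingRank, List.length_cons, rankBound]
    nlinarith [Nat.mul_le_mul_right (rankBound l.length) h]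

theorem rewritingRank_step_lt (h1 : (1 : M) ∉ E) (hgen : IsGenSet E)
    (hfac : IsFactorable E η) (hs : IsStrong E η) (u : List M) {v : List M} {x y : M}
    (hx : x ∈ E) (hy : y ∈ E) (hv : ∀ a ∈ v, a ∈ E) (hb : (η (x * y)).2 ∈ E)
    (hxy : η (x * y) ≠ (x, y)) :
    rewritingRank η (u ++ [(η (x * y)).1, (η (x * y)).2] ++ v)
      < rewritingRank η (u ++ [x, y] ++ v) := by
  induction u with
  | nil =>
    have hlt := (unsettledWeight_step (u := []) h1 hgen hfac hs hy hv hb hxy).2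
      (settled_nil h1 hgen hfac.1 hx)
    have hr := rewritingRank_lt (η := η) ((η (x * y)).2 :: v)
    have hmul := Nat.mul_le_mul_right (rankBound (y :: v).length) hlt
    simp only [List.nil_append, List.cons_append, List.length_cons] at hmul hr ⊢
    rw [rewritingRank.eq_2, rewritingRank.eq_2 η x]
    simp only [List.length_cons]
    rw [Nat.succ_mul] at hmul
    omega
  | cons c u ih =>
    have hle := (unsettledWeight_step (u := c :: u) h1 hgen hfac hs hy hv hb hxy).1
    have hlen : (u ++ [(η (x * y)).1, (η (x * y)).2] ++ v).length
        = (u ++ [x, y] ++ v).length := by simp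
    simp only [List.cons_append] at hle ih ⊢
    rw [rewritingRank, rewritingRank]
    have hmul := Nat.mul_le_mul_right (rankBound (u ++ [x, y] ++ v).length) hle
    simp only [List.append_assoc, List.cons_append] at hlen hmul ih ⊢
    rw [hlen]
    omega

theorem ruleRHS_mem (h1 : (1 : M) ∉ E) (hgen : IsGenSet E) (hη : IsFactorizationMap E η)
    {x y : M} (hx : x ∈ E) (hy : y ∈ E) : ∀ a ∈ ruleRHS η x y, a ∈ E := by
  intro a ha
  have hfst := eta_mul_fst_eq_one_or_mem h1 hgen hη hx hy
  have hsnd := eta_snd_eq_one_or_mem hη (x * y)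
  unfold ruleRHS at ha
  split_ifs at ha <;> simp at ha <;> grind

theorem ruleRHS_prod (hη : IsFactorizationMap E η) (x y : M) :
    (ruleRHS η x y).prod = x * y := by
  have h := hη.1 (x * y)
  unfold ruleRHS
  split_ifs with ha hb hb <;> simp_all

theorem ruleRHS_length_lt_or (η : M → M × M) (x y : M) :
    (ruleRHS η x y).length < 2 ∨
      (ruleRHS η x y = [(η (x * y)).1, (η (x * y)).2] ∧ (η (x * y)).2 ≠ 1) := by
  unfold ruleRHS
  split_ifs <;> simp_all

theorem Step.mem (h1 : (1 : M) ∉ E) (hgen : IsGenSet E) (hη : IsFactorizationMap E η)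
    {w z : List M} (h : Step E η w z) (hw : ∀ a ∈ w, a ∈ E) : ∀ a ∈ z, a ∈ E := by
  obtain ⟨u, v, x, y, hx, hy, -, rfl, rfl⟩ := h
  have hr := ruleRHS_mem h1 hgen hη hx hy
  intro a ha
  simp only [List.mem_append] at ha hw
  rcases ha with (ha | ha) | ha
  · exact hw a (by simp [ha])
  · exact hr a ha
  · exact hw a (by simp [ha])

theorem Step.prod_eq (hη : IsFactorizationMap E η) {w z : List M} (h : Step E η w z) :
    w.prod = z.prod := by
  obtain ⟨u, v, x, y, -, -, -, rfl, rfl⟩ := h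
  simp [ruleRHS_prod hη, mul_assoc]

theorem prod_eq_of_eqvGen_step (hη : IsFactorizationMap E η) {w z : List M}
    (h : Relation.EqvGen (Step E η) w z) : w.prod = z.prod := by
  induction h with
  | rel _ _ h => exact h.prod_eq hη
  | refl => rfl
  | symm _ _ _ ih => exact ih.symm
  | trans _ _ _ _ _ ih₁ ih₂ => exact ih₁.trans ih₂

theorem Step.measure_lt (h1 : (1 : M) ∉ E) (hgen : IsGenSet E) (hfac : IsFactorable E η)
    (hs : IsStrong E η) {w z : List M} (h : Step E η w z) (hw : ∀ a ∈ w, a ∈ E) :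
    toLex (z.length, rewritingRank η z) < toLex (w.length, rewritingRank η w) := by
  obtain ⟨u, v, x, y, hx, hy, hxy, rfl, rfl⟩ := h
  rw [Prod.Lex.toLex_lt_toLex]
  rcases ruleRHS_length_lt_or η x y with hlen | ⟨hr, hne⟩
  · left
    simp only [List.length_append, List.length_cons, List.length_nil]
    omega
  · right
    rw [hr]
    exact ⟨by simp, rewritingRank_step_lt h1 hgen hfac hs u hx hy
      (fun a ha => hw a (by simp [ha]))
      ((eta_snd_eq_one_or_mem hfac.1 (x * y)).resolve_left hne) hxy⟩

theorem noetherian_of_isStrong (h1 : (1 : M) ∉ E) (hgen : IsGenSet E)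
    (hfac : IsFactorable E η) (hs : IsStrong E η) : Noetherian E η := by
  rintro ⟨f, hf, hstep⟩
  exact (wellFounded_iff_isEmpty_descending_chain.1 (wellFounded_lt (α := ℕ ×ₗ ℕ))).false
    ⟨fun k => toLex ((f k).length, rewritingRank η (f k)),
      fun k => (hstep k).measure_lt h1 hgen hfac hs (hf k)⟩

theorem exists_irr_of_isStrong (h1 : (1 : M) ∉ E) (hgen : IsGenSet E)
    (hfac : IsFactorable E η) (hs : IsStrong E η) (w : List M) (hw : ∀ a ∈ w, a ∈ E) :
    ∃ z : List M, (∀ a ∈ z, a ∈ E) ∧ Relation.EqvGen (Step E η) w z ∧ Irr E η z := by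
  induction w using (InvImage.wf (fun w : List M => toLex (w.length, rewritingRank η w))
    (wellFounded_lt (α := ℕ ×ₗ ℕ))).induction with
  | _ w ih =>
    by_cases hirr : Irr E η w
    · exact ⟨w, hw, .refl w, hirr⟩
    · obtain ⟨v, hv⟩ := not_not.1 hirr
      obtain ⟨z, hz, hvz, hzirr⟩ :=
        ih v (hv.measure_lt h1 hgen hfac hs hw) (hv.mem h1 hgen hfac.1 hw)
      exact ⟨z, hz, .trans _ _ _ (.rel _ _ hv) hvz, hzirr⟩

theorem irr_of_length_lt_two {w : List M} (h : w.length < 2) : Irr E η w := by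
  rintro ⟨z, u, v, x, y, -, -, -, rfl, -⟩
  simp only [List.length_append, List.length_cons, List.length_nil] at h
  omega

theorem eq_of_pair_eq_append {α : Type*} {u v : List α} {x y x' y' : α}
    (h : [x, y] = u ++ [x', y'] ++ v) : x = x' ∧ y = y' := by
  have hlen := congrArg List.length h
  simp only [List.length_append, List.length_cons, List.length_nil] at hlen
  have hu : u = [] := List.length_eq_zero_iff.1 (by omega)
  have hv : v = [] := List.length_eq_zero_iff.1 (by omega)
  simpa [hu, hv] using h

theorem Irr.of_append_right {w v : List M} (h : Irr E η (w ++ v)) : Irr E η w := by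
  rintro ⟨z, u, t, x, y, hx, hy, hxy, rfl, rfl⟩
  exact h ⟨_, u, t ++ v, x, y, hx, hy, hxy, by simp, rfl⟩

theorem Irr.eta_prod (h1 : (1 : M) ∉ E) (hgen : IsGenSet E) (hη : IsFactorizationMap E η)
    (hs : IsStrong E η) {l : List M} {s : M} (hl : ∀ a ∈ l ++ [s], a ∈ E)
    (h : Irr E η (l ++ [s])) : η (l.prod * s) = (l.prod, s) := by
  induction l using List.reverseRecOn generalizing s with
  | nil => simpa using eta_of_mem h1 hgen hη (hl s (by simp))
  | append_singleton l t ih =>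
    have hsE : s ∈ E := hl s (by simp)
    have htE : t ∈ E := hl t (by simp)
    have ht := ih (s := t) (fun a ha => hl a (by simp only [List.mem_append] at ha ⊢; tauto))
      h.of_append_right
    apply hs.stable_mul hη hsE
    rw [List.prod_append, List.prod_singleton, ht]
    by_contra hts
    exact h ⟨_, l, [], t, s, htE, hsE, hts, by simp, rfl⟩

theorem Irr.eq_of_prod_eq (h1 : (1 : M) ∉ E) (hgen : IsGenSet E)
    (hη : IsFactorizationMap E η) (hs : IsStrong E η) {w z : List M}
    (hw : ∀ a ∈ w, a ∈ E) (hz : ∀ a ∈ z, a ∈ E) (hwirr : Irr E η w) (hzirr : Irr E η z)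
    (h : w.prod = z.prod) : w = z := by
  have hne : ∀ {l : List M} {s : M}, (∀ a ∈ l ++ [s], a ∈ E) → Irr E η (l ++ [s]) →
      l.prod * s ≠ 1 := by
    intro l s hl hirr hprod
    have he := hirr.eta_prod h1 hgen hη hs hl
    rw [hprod, hη.2.2.2] at he
    have hs1 : (1 : M) = s := congrArg Prod.snd he
    exact h1 (hs1 ▸ hl s (by simp))
  induction w using List.reverseRecOn generalizing z with
  | nil =>
    rcases List.eq_nil_or_concat' z with rfl | ⟨z, t, rfl⟩
    · rfl
    · exact absurd (by simpa using h.symm) (hne hz hzirr)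
  | append_singleton w s ih =>
    rcases List.eq_nil_or_concat' z with rfl | ⟨z, t, rfl⟩
    · exact absurd (by simpa using h) (hne hw hwirr)
    · have he₁ := hwirr.eta_prod h1 hgen hη hs hw
      have he₂ := hzirr.eta_prod h1 hgen hη hs hz
      simp only [List.prod_append, List.prod_singleton] at h
      rw [h, he₂] at he₁
      obtain ⟨hprod, rfl⟩ := Prod.ext_iff.1 he₁
      rw [ih (fun a ha => hw a (by simp [ha])) (fun a ha => hz a (by simp [ha]))
        hwirr.of_append_right hzirr.of_append_right hprod.symm]

theorem stronglyMinimal_of_isFactorizationMap (hη : IsFactorizationMap E η) :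
    StronglyMinimal E η := by
  refine ⟨fun s _ => irr_of_length_lt_two (by simp), fun x _ y _ _ => ?_, ?_⟩
  · rcases ruleRHS_length_lt_or η x y with hlen | ⟨hr, -⟩
    · exact irr_of_length_lt_two hlen
    · rw [hr]
      rintro ⟨z, u, v, a, b, -, -, hab, heq, -⟩
      obtain ⟨rfl, rfl⟩ := eq_of_pair_eq_append heq
      exact hab (by rw [hη.1])
  · rintro x _ y _ _ ⟨u, v, x', y', -, -, -, hne, heq⟩
    obtain ⟨rfl, rfl⟩ := eq_of_pair_eq_append heq
    exact hne rfl

end StrongFactorable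

/-- Let `(M, E, η)` be a factorable monoid satisfying the stronger conditions
`η′(x·s) = η′(η′(x)·s)` and `η̄(x·s) = η̄(x)·η̄(η′(x)·s)` for all `x ∈ M` and `s ∈ E`.
Then the rewriting system associated with `η` is complete (in particular noetherian). -/
theorem complete_rewritingSystem_of_strong_factorable
    {M : Type*} [Monoid M] (E : Set M) (h1 : (1 : M) ∉ E) (hgen : IsGenSet E)
    (η : M → M × M) (hfac : IsFactorable E η)
    (hstrong : ∀ x : M, ∀ s ∈ E,
      (η (x * s)).2 = (η ((η x).2 * s)).2 ∧
      (η (x * s)).1 = (η x).1 * (η ((η x).2 * s)).1) :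
    Complete E η := by
  have hs : IsStrong E η := hstrong
  refine ⟨stronglyMinimal_of_isFactorizationMap hfac.1,
    noetherian_of_isStrong h1 hgen hfac hs, fun w hw => ?_⟩
  obtain ⟨z, hz, hwz, hzirr⟩ := exists_irr_of_isStrong h1 hgen hfac hs w hw
  refine ⟨z, ⟨hz, hwz, hzirr⟩, fun z' ⟨hz', hwz', hzirr'⟩ => ?_⟩
  exact hzirr'.eq_of_prod_eq h1 hgen hfac.1 hs hz' hz hzirr
    ((prod_eq_of_eqvGen_step hfac.1 hwz').symm.trans (prod_eq_of_eqvGen_step hfac.1 hwz))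
end

section
/- For every n ≥ 1, there are only finitely many words in F_n that are simultaneously reduced, right-most, and small. -/
/-- `w` is a word of the free monoid `F_n` on the letters `{1, …, n}`. -/
def InF (n : ℕ) (w : List ℕ) : Prop := ∀ a ∈ w, 1 ≤ a ∧ a ≤ n

/-- The congruence on a free monoid of words generated by a relation `r`. -/
inductive CongClosure (r : List ℕ → List ℕ → Prop) : List ℕ → List ℕ → Prop
  | rel (u v : List ℕ) {x y : List ℕ} : r x y → CongClosure r (u ++ x ++ v) (u ++ y ++ v)
  | refl (x : List ℕ) : CongClosure r x x
  | symm {x y : List ℕ} : CongClosure r x y → CongClosure r y x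
  | trans {x y z : List ℕ} : CongClosure r x y → CongClosure r y z → CongClosure r x z

/-- The defining relations of `P_n`: `ab = ba` for `|a − b| ≥ 2`, and `aa = a`. -/
inductive PRel (n : ℕ) : List ℕ → List ℕ → Prop
  | comm (a b : ℕ) : 1 ≤ a → a ≤ n → 1 ≤ b → b ≤ n → (a + 2 ≤ b ∨ b + 2 ≤ a) →
      PRel n [a, b] [b, a]
  | idem (a : ℕ) : 1 ≤ a → a ≤ n → PRel n [a, a] [a]

/-- The congruence `∼_P` on `F_n`. -/
def PCong (n : ℕ) : List ℕ → List ℕ → Prop := CongClosure (PRel n)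

/-- A word is reduced if it has no two adjacent equal letters. -/
def Reduced (w : List ℕ) : Prop := w.Chain' (· ≠ ·)

/-- A word `(i_s, …, i_1)` is right-most if whenever two adjacent letters differ by at
least `2`, the left one is smaller. -/
def RightMost (w : List ℕ) : Prop :=
  w.Chain' (fun a b => (a + 2 ≤ b ∨ b + 2 ≤ a) → a < b)

/-- A word `I ∈ F_n` is small if it is not `∼_P`-equivalent to any word of the form
`J·(k+1)·k·(k+1)·K`. -/
def SmallWord (n : ℕ) (w : List ℕ) : Prop :=
  ¬ ∃ (J K : List ℕ) (k : ℕ), 1 ≤ k ∧ k + 1 ≤ n ∧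
      PCong n w (J ++ [k + 1, k, k + 1] ++ K)

/-- The property of being reduced, right-most and small. -/
def IsGood (n : ℕ) (w : List ℕ) : Prop := Reduced w ∧ RightMost w ∧ SmallWord n w

theorem PCong.append_left_right {n : ℕ} {x y : List ℕ} (h : PCong n x y) (u v : List ℕ) :
    PCong n (u ++ x ++ v) (u ++ y ++ v) := by
  unfold PCong at h ⊢
  induction h with
  | rel u' v' r =>
    have := CongClosure.rel (u ++ u') (v' ++ v) r
    simpa [List.append_assoc] using this
  | refl x => exact .refl _
  | symm _ ih => exact .symm ih
  | trans _ _ ih₁ ih₂ => exact .trans ih₁ ih₂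

theorem SmallWord.of_infix {n : ℕ} {u w : List ℕ} (hw : SmallWord n w) (h : u <:+: w) :
    SmallWord n u := by
  rintro ⟨J, K, k, hk, hkn, hc⟩
  obtain ⟨s, t, rfl⟩ := h
  refine hw ⟨s ++ J, K ++ t, k, hk, hkn, ?_⟩
  simpa [List.append_assoc] using hc.append_left_right s t

theorem IsGood.of_infix {n : ℕ} {u w : List ℕ} (hw : IsGood n w) (h : u <:+: w) :
    IsGood n u :=
  ⟨List.IsChain.infix hw.1 h, List.IsChain.infix hw.2.1 h, hw.2.2.of_infix h⟩

/-- A letter commutes with a word all of whose letters are smaller by at least `2`. -/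
theorem PCong.append_singleton_comm {n b : ℕ} (hb : 1 ≤ b) (hbn : b ≤ n) (v : List ℕ)
    (hv : ∀ a ∈ v, 1 ≤ a ∧ a + 2 ≤ b) : PCong n (v ++ [b]) (b :: v) := by
  induction v with
  | nil => exact .refl _
  | cons a v ih =>
    have ha := hv a (by simp)
    have h₁ := (ih fun c hc => hv c (by simp [hc])).append_left_right [a] []
    have h₂ : PCong n ([] ++ [a, b] ++ v) ([] ++ [b, a] ++ v) :=
      .rel [] v (.comm a b ha.1 (by lia) hb hbn (.inl ha.2))
    simp only [List.append_nil, List.nil_append, List.cons_append] at h₁ h₂ ⊢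
    exact .trans h₁ h₂

/-- The largest possible letter occurs at most once in a good word. -/
theorem IsGood.notMem_of_eq_append_cons {n m : ℕ} (hmn : m ≤ n) {A B : List ℕ}
    (hg : IsGood n (A ++ m :: B)) (hF : InF m (A ++ m :: B)) : m ∉ B := by
  induction m generalizing A B with
  | zero => exact absurd (hF 0 (by simp)).1 (by simp)
  | succ m ih =>
    intro hB
    obtain ⟨u, C, rfl, hu⟩ := List.eq_append_cons_of_mem hB
    have hg' : IsGood n ((m + 1) :: u ++ [m + 1]) :=
      hg.of_infix ⟨A, C, by simp⟩
    have huF : InF m u := fun a ha => by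
      have h₁ := hF a (by simp [ha])
      have h₂ : a ≠ m + 1 := fun h => hu (h ▸ ha)
      lia
    match u with
    | [] => simpa [Reduced, List.Chain'] using hg'.1
    | a :: v =>
      have ha := huF a (by simp)
      have ham : a = m := by
        have h := hg'.2.1
        simp only [RightMost, List.Chain', List.cons_append, List.isChain_cons_cons] at h
        have := h.1
        lia
      subst ham
      have hv : a ∉ v :=
        ih (A := []) (by lia) (hg'.of_infix ⟨[a + 1], [a + 1], by simp⟩) (by simpa using huF)
      refine hg'.2.2 ⟨[], v, a, ha.1, hmn, ?_⟩
      have hc := PCong.append_singleton_comm (n := n) (b := a + 1) (by lia) hmn v fun c hc => by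
        have h₁ := huF c (by simp [hc])
        have h₂ : c ≠ a := fun h => hv (h ▸ hc)
        lia
      simpa using hc.append_left_right [a + 1, a] []

theorem IsGood.length_lt_two_pow {n m : ℕ} (hmn : m ≤ n) {w : List ℕ}
    (hg : IsGood n w) (hF : InF m w) : w.length < 2 ^ m := by
  induction m generalizing w with
  | zero =>
    have : w = [] := List.eq_nil_iff_forall_not_mem.2 fun a ha => by have := hF a ha; lia
    simp [this]
  | succ m ih =>
    have low {u : List ℕ} (hu : u <:+: w) (hm : m + 1 ∉ u) : u.length < 2 ^ m :=
      ih (by lia) (hg.of_infix hu) fun a ha => by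
        have h₁ := hF a (hu.subset ha)
        have h₂ : a ≠ m + 1 := fun h => hm (h ▸ ha)
        lia
    rw [pow_succ]
    by_cases hw : m + 1 ∈ w
    · obtain ⟨A, B, rfl, hA⟩ := List.eq_append_cons_of_mem hw
      have hB := hg.notMem_of_eq_append_cons hmn hF
      have h₁ := low (u := A) ⟨[], (m + 1) :: B, by simp⟩ hA
      have h₂ := low (u := B) ⟨A ++ [m + 1], [], by simp⟩ hB
      simp only [List.length_append, List.length_cons]
      lia
    · have := low (List.infix_refl w) hw
      lia

/-- For every `n ≥ 1` there are only finitely many words in `F_n` that are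
simultaneously reduced, right-most and small. -/
theorem finitely_many_small_words (n : ℕ) (hn : 1 ≤ n) :
    {w : List ℕ | InF n w ∧ Reduced w ∧ RightMost w ∧ SmallWord n w}.Finite := by
  refine ((List.finite_length_lt (Set.Icc 1 n) (2 ^ n)).image (List.map Subtype.val)).subset ?_
  rintro w ⟨hF, hg⟩
  have hlen := IsGood.length_lt_two_pow le_rfl hg hF
  have hw : w ∈ Set.range (List.map (Subtype.val : Set.Icc 1 n → ℕ)) := by
    rw [Set.range_list_map_coe]
    exact hF
  obtain ⟨l, rfl⟩ := hw
  exact ⟨l, by simpa using hlen, rfl⟩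
end

section
/- Let w ∈ F_n be a right-most, reduced word, written as its decomposition into maximal descending runs w = J_{a_l}^{b_l}·J_{a_{l−1}}^{b_{l−1}}⋯J_{a_1}^{b_1}, where J_a^b denotes the word b·(b−1)⋯a (for a ≤ b) and a_r < b_{r−1} for all 2 ≤ r ≤ l. Then w is small if and only if b_{r+1} < b_r for all 1 ≤ r ≤ l−1. -/
/-- The word `J_a^b = b·(b−1)⋯a` (for `a ≤ b`). -/
def Jseg (a b : ℕ) : List ℕ := (List.range' a (b + 1 - a)).reverse

theorem CongClosure.append {r : List ℕ → List ℕ → Prop} {x y : List ℕ} (h : CongClosure r x y)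
    (u v : List ℕ) : CongClosure r (u ++ x ++ v) (u ++ y ++ v) := by
  induction h with
  | rel u' v' h => simpa using CongClosure.rel (u ++ u') (v' ++ v) h
  | refl x => exact .refl _
  | symm _ ih => exact ih.symm
  | trans _ _ ih₁ ih₂ => exact ih₁.trans ih₂

/-- A letter commutes with a word all of whose letters are smaller by at least `2`. -/
theorem PCong.append_singleton {n c : ℕ} (hc : c ≤ n) (L : List ℕ)
    (hL : ∀ x ∈ L, 1 ≤ x ∧ x + 2 ≤ c) : PCong n (L ++ [c]) (c :: L) := by
  induction L with
  | nil => exact .refl _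
  | cons x L ih =>
    have hx := hL x (by simp)
    have h₁ : PCong n (x :: (L ++ [c])) (x :: c :: L) := by
      simpa [PCong] using (ih fun y hy => hL y (by simp [hy])).append [x] []
    have h₂ : PCong n (x :: c :: L) (c :: x :: L) := by
      simpa [PCong] using CongClosure.rel [] L
        (PRel.comm x c hx.1 (by omega) (by omega) hc (Or.inl hx.2))
    exact h₁.trans h₂

theorem mem_Jseg {a b x : ℕ} : x ∈ Jseg a b ↔ a ≤ x ∧ x ≤ b := by
  simp only [Jseg, List.mem_reverse, List.mem_range'_1]
  omega

theorem Jseg_eq_nil {a b : ℕ} (h : b < a) : Jseg a b = [] := by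
  have : b + 1 - a = 0 := by omega
  simp [Jseg, this]

theorem Jseg_succ {a b : ℕ} (h : a ≤ b + 1) : Jseg a (b + 1) = (b + 1) :: Jseg a b := by
  have h₁ : b + 1 + 1 - a = (b + 1 - a) + 1 := by omega
  have h₂ : a + (b + 1 - a) = b + 1 := by omega
  simp [Jseg, h₁, List.range'_concat, h₂]

theorem Jseg_append {a b c : ℕ} (hac : a ≤ c + 1) (hcb : c ≤ b) :
    Jseg a b = Jseg (c + 1) b ++ Jseg a c := by
  induction b, hcb using Nat.le_induction with
  | base => simp [Jseg_eq_nil]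
  | succ b hb ih => rw [Jseg_succ (by omega), Jseg_succ (a := c + 1) (by omega), ih]; rfl

/-- Two consecutive runs whose maxima fail to increase are equivalent to a word that contains
`(k+1)·k·(k+1)`. -/
theorem exists_pCong_Jseg_append {n a a' b k : ℕ} (ha : 1 ≤ a) (hak : a ≤ k) (hkb : k + 1 ≤ b)
    (hk : k + 1 ≤ n) (ha' : a' ≤ k + 1) :
    ∃ J K, PCong n (Jseg a b ++ Jseg a' (k + 1)) (J ++ [k + 1, k, k + 1] ++ K) := by
  obtain ⟨m, rfl⟩ : ∃ m, k = m + 1 := ⟨k - 1, by omega⟩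
  refine ⟨Jseg (m + 3) b, Jseg a m ++ Jseg a' (m + 1), ?_⟩
  rw [Jseg_append (c := m + 2) (by omega) hkb, Jseg_succ (a := a) (b := m + 1) (by omega),
    Jseg_succ (a := a) hak, Jseg_succ ha']
  have h : PCong n (Jseg a m ++ [m + 2]) ((m + 2) :: Jseg a m) :=
    PCong.append_singleton hk _ fun x hx => by rw [mem_Jseg] at hx; omega
  simpa [PCong] using h.append (Jseg (m + 3) b ++ [m + 2, m + 1]) (Jseg a' (m + 1))

/-- Transition function of the automaton that detects two occurrences of `k + 1` with an
occurrence of `k`, but none of `k + 2`, between them. State `1` means that `k + 1` has been read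
and neither `k` nor `k + 2` since, state `2` that `k` has been read after `k + 1` and no `k + 2`
since, and state `3` is the absorbing state reached upon detection. -/
def braidStep (k : ℕ) (s : Fin 4) (c : ℕ) : Fin 4 :=
  if s = 3 then 3
  else if c = k + 2 then 0
  else if c = k + 1 then (if s = 2 then 3 else 1)
  else if c = k ∧ s = 1 then 2
  else s

theorem PCong.foldl_braidStep_eq {n : ℕ} {x y : List ℕ} (h : PCong n x y) (k : ℕ) (s : Fin 4) :
    x.foldl (braidStep k) s = y.foldl (braidStep k) s := by
  induction h generalizing s with
  | rel u v h =>
    simp only [List.foldl_append]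
    congr 1
    generalize u.foldl (braidStep k) s = t
    cases h with
    | comm a b _ _ _ _ hab =>
      simp only [List.foldl_cons, List.foldl_nil, braidStep]
      grind
    | idem a _ _ =>
      simp only [List.foldl_cons, List.foldl_nil, braidStep]
      grind
  | refl x => rfl
  | symm _ ih => exact (ih s).symm
  | trans _ _ ih₁ ih₂ => exact (ih₁ s).trans (ih₂ s)

theorem foldl_braidStep_three (k : ℕ) (L : List ℕ) : L.foldl (braidStep k) 3 = 3 := by
  induction L with
  | nil => rfl
  | cons x L ih => simpa [braidStep] using ih

theorem foldl_braidStep_of_braid (k : ℕ) (J K : List ℕ) (s : Fin 4) :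
    (J ++ [k + 1, k, k + 1] ++ K).foldl (braidStep k) s = 3 := by
  have h (t : Fin 4) : [k + 1, k, k + 1].foldl (braidStep k) t = 3 := by
    simp only [List.foldl_cons, List.foldl_nil, braidStep]
    grind
  rw [List.foldl_append, List.foldl_append, h, foldl_braidStep_three]

theorem foldl_braidStep_Jseg_ne_three {k a b : ℕ} {s : Fin 4} (hs : s ≠ 3)
    (hb : b = k + 1 → s ≠ 2) (ha : 1 ≤ a) : (Jseg a b).foldl (braidStep k) s ≠ 3 := by
  induction b generalizing s with
  | zero => simpa [Jseg_eq_nil ha] using hs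
  | succ b ih =>
    rcases lt_or_ge (b + 1) a with h | h
    · simpa [Jseg_eq_nil h] using hs
    · rw [Jseg_succ h, List.foldl_cons]
      apply ih <;> (unfold braidStep; grind)

theorem foldl_braidStep_eq_zero {k : ℕ} (L : List ℕ) (hL : ∀ x ∈ L, x ≤ k) :
    L.foldl (braidStep k) 0 = 0 := by
  induction L with
  | nil => rfl
  | cons x L ih =>
    have hx := hL x (by simp)
    have h : braidStep k 0 x = 0 := by unfold braidStep; grind
    rw [List.foldl_cons, h, ih fun y hy => hL y (by simp [hy])]

/-- A concatenation of runs with increasing maxima is never detected by the automaton. -/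
theorem foldl_braidStep_flatten {l : ℕ} {a b : ℕ → ℕ} (ha : ∀ r, 1 ≤ r → r ≤ l → 1 ≤ a r)
    (hb : ∀ r, 1 ≤ r → r + 1 ≤ l → b (r + 1) < b r) (k m : ℕ) (hm : m ≤ l) :
    let s := (((List.range m).map fun i => Jseg (a (l - i)) (b (l - i))).flatten).foldl
      (braidStep k) 0
    s ≠ 3 ∧ (s ≠ 0 → 1 ≤ m ∧ k + 1 ≤ b (l + 1 - m)) := by
  induction m with
  | zero => simp
  | succ m ih =>
    have ih := ih (by omega)
    simp only [List.range_succ, List.map_append, List.flatten_append, List.foldl_append,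
      List.map_cons, List.map_nil, List.flatten_cons, List.flatten_nil, List.append_nil] at ih ⊢
    generalize (((List.range m).map fun i => Jseg (a (l - i)) (b (l - i))).flatten).foldl
      (braidStep k) 0 = s at ih ⊢
    obtain ⟨hs, hs'⟩ := ih
    have hlt : s ≠ 0 → k + 1 < b (l - m) := fun h => by
      obtain ⟨h₁, h₂⟩ := hs' h
      have h₃ := hb (l - m) (by omega) (by omega)
      rw [show l - m + 1 = l + 1 - m by omega] at h₃
      omega
    rw [show l + 1 - (m + 1) = l - m by omega]
    refine ⟨foldl_braidStep_Jseg_ne_three hs (fun h h₂ => ?_) (ha _ (by omega) (by omega)),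
      fun h => ⟨by omega, ?_⟩⟩
    · have := hlt (by simp [h₂])
      omega
    · by_contra hk
      have h₀ : s = 0 := by
        by_contra h₀
        have := hlt h₀
        omega
      subst h₀
      exact h (foldl_braidStep_eq_zero _ fun x hx => by rw [mem_Jseg] at hx; omega)

/-- Smallness criterion: a right-most reduced word, written as its decomposition
`J_{a_l}^{b_l}·J_{a_{l−1}}^{b_{l−1}}⋯J_{a_1}^{b_1}` into maximal descending runs (with
`1 ≤ a_r ≤ b_r ≤ n` and `a_r < b_{r−1}` for `2 ≤ r ≤ l`), is small if and only if
`b_{r+1} < b_r` for all `1 ≤ r ≤ l−1`. -/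
theorem small_iff_descending_maxima (n l : ℕ) (hl : 1 ≤ l) (a b : ℕ → ℕ)
    (hab : ∀ r, 1 ≤ r → r ≤ l → 1 ≤ a r ∧ a r ≤ b r ∧ b r ≤ n)
    (hjoin : ∀ r, 2 ≤ r → r ≤ l → a r < b (r - 1)) :
    SmallWord n (((List.range l).map (fun i => Jseg (a (l - i)) (b (l - i)))).flatten) ↔
      ∀ r, 1 ≤ r → r + 1 ≤ l → b (r + 1) < b r := by
  constructor
  · intro hsmall r hr hrl
    by_contra! hle
    have hj := hjoin (r + 1) (by omega) hrl
    rw [Nat.add_sub_cancel] at hj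
    have h₁ := hab (r + 1) (by omega) hrl
    have h₀ := hab r hr (by omega)
    obtain ⟨k, hk⟩ : ∃ k, b r = k + 1 := ⟨b r - 1, by omega⟩
    obtain ⟨J, K, h⟩ := exists_pCong_Jseg_append (n := n) (a := a (r + 1)) (a' := a r)
      (b := b (r + 1)) (k := k) h₁.1 (by omega) (by omega) (by omega) (by omega)
    obtain ⟨U, V, hUV⟩ : ∃ U V,
        ((List.range l).map (fun i => Jseg (a (l - i)) (b (l - i)))).flatten =
          U ++ (Jseg (a (r + 1)) (b (r + 1)) ++ Jseg (a r) (b r)) ++ V := by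
      obtain ⟨p, rfl⟩ : ∃ p, l = p + 2 + (r - 1) := ⟨l - (r + 1), by omega⟩
      rw [List.range_add, List.range_succ, List.range_succ]
      simp only [List.map_append, List.flatten_append, List.map_cons, List.map_nil,
        List.flatten_cons, List.flatten_nil, List.append_nil,
        show p + 2 + (r - 1) - p = r + 1 by omega,
        show p + 2 + (r - 1) - (p + 1) = r by omega]
      exact ⟨_, _, congrArg (· ++ _) (List.append_assoc _ _ _)⟩
    refine hsmall ⟨U ++ J, K ++ V, k, by omega, by omega, ?_⟩
    rw [hUV, hk]
    simpa [PCong] using h.append U V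
  · rintro hb ⟨J, K, k, -, -, h⟩
    refine (foldl_braidStep_flatten (fun r h₁ h₂ => (hab r h₁ h₂).1) hb k l le_rfl).1 ?_
    rw [h.foldl_braidStep_eq, foldl_braidStep_of_braid]
end

section
/- Let M be a left locally Gaussian monoid and E ⊆ M∖{1} a generating set closed under llcm and left-complement. Let x ∈ M∖{1} with E-normal form NF(x) = x_p⋯x_1, let a ∈ E, and let NF(x·a) = y_q⋯y_1 be the E-normal form of x·a. Then either x_1·a = y_1, or there exists a generator z ∈ E such that (z, y_1) is an E-normal sequence with z·y_1 = x_1·a (i.e., NF(x_1·a) = z·y_1). -/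
/-- `x` left-divides `y`: `y = x·z` for some `z`. -/
def LDvd {M : Type*} [Monoid M] (x y : M) : Prop := ∃ z, y = x * z

/-- `y` right-divides `x`: `x = z·y` for some `z`. -/
def RDvd {M : Type*} [Monoid M] (y x : M) : Prop := ∃ z, x = z * y

/-- `c` is a common left-multiple of `a` and `b`. -/
def IsCLM {M : Type*} [Monoid M] (a b c : M) : Prop := RDvd a c ∧ RDvd b c

/-- `c` is a least common left-multiple (llcm) of `a` and `b`: a common left-multiple
that right-divides every common left-multiple. -/
def IsLLCM {M : Type*} [Monoid M] (a b c : M) : Prop :=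
  IsCLM a b c ∧ ∀ d, IsCLM a b d → RDvd c d

/-- `M` is right-cancellative. -/
def RightCancellative (M : Type*) [Monoid M] : Prop :=
  ∀ a b c : M, a * c = b * c → a = b

/-- `M` is left-noetherian: there is no infinite strictly descending chain with respect
to proper left-divisibility. -/
def LeftNoetherian (M : Type*) [Monoid M] : Prop :=
  ¬ ∃ f : ℕ → M, ∀ k, LDvd (f (k + 1)) (f k) ∧ f (k + 1) ≠ f k

/-- `M` is left locally Gaussian: right-cancellative, left-noetherian, and any two
elements admitting a common left-multiple admit a least common left-multiple. -/
def LeftLocallyGaussian (M : Type*) [Monoid M] : Prop :=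
  RightCancellative M ∧ LeftNoetherian M ∧
  ∀ a b : M, (∃ c, IsCLM a b c) → ∃ c, IsLLCM a b c

/-- `E` is closed under least common left-multiples. -/
def ClosedLLCM {M : Type*} [Monoid M] (E : Set M) : Prop :=
  ∀ x ∈ E, ∀ y ∈ E, ∀ c, IsLLCM x y c → c ∈ E

/-- `E` is closed under left-complements: if `c = llcm(x,y)` and `c = w·y`, then the
left-complement `w = x/y` lies in `E ∪ {1}`. -/
def ClosedLComp {M : Type*} [Monoid M] (E : Set M) : Prop :=
  ∀ x ∈ E, ∀ y ∈ E, ∀ c w, IsLLCM x y c → c = w * y → (w ∈ E ∨ w = 1)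

/-- `x ⊲_E y`: every right-divisor of `x·y` lying in `E` right-divides `y`. -/
def Tri {M : Type*} [Monoid M] (E : Set M) (x y : M) : Prop :=
  ∀ d ∈ E, RDvd d (x * y) → RDvd d y

/-- The list `[x_p, …, x_1]` is an `E`-normal sequence: all entries lie in `E` and
`x_{i+1} ⊲_E x_i` for all `i`. -/
def ENormalSeq {M : Type*} [Monoid M] (E : Set M) (l : List M) : Prop :=
  (∀ a ∈ l, a ∈ E) ∧ l.Chain' (Tri E)

/-- If `b` and `w·b` lie in `E`, then `w` lies in `E ∪ {1}`. -/
theorem ClosedLComp.quotient_mem {M : Type*} [Monoid M] {E : Set M} (hcc : ClosedLComp E)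
    {b w : M} (hb : b ∈ E) (hc : w * b ∈ E) : w ∈ E ∨ w = 1 :=
  hcc _ hc b hb (w * b) w ⟨⟨⟨1, (one_mul _).symm⟩, ⟨w, rfl⟩⟩, fun _ hd => hd.1⟩ rfl

/-- A right-divisor in `E` of the product of an `E`-normal sequence right-divides its
last letter. -/
theorem ENormalSeq.rdvd_last {M : Type*} [Monoid M] (hM : LeftLocallyGaussian M)
    {E : Set M} (hcc : ClosedLComp E)
    {l : List M} {x d : M} (h : ENormalSeq E (l ++ [x])) (hd : d ∈ E)
    (hdvd : RDvd d (l ++ [x]).prod) : RDvd d x := by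
  induction l using List.reverseRecOn generalizing x d with
  | nil => simpa using hdvd
  | append_singleton l y ih =>
    obtain ⟨hmem, hchain⟩ := h
    have hx : x ∈ E := hmem x (by simp)
    have hinit : ENormalSeq E (l ++ [y]) :=
      ⟨fun b hb => hmem b (List.mem_append_left _ hb), (List.isChain_append.1 hchain).1⟩
    have htri : Tri E y x := (List.isChain_append.1 hchain).2.2 y (by simp) x (by simp)
    rw [List.prod_append, List.prod_singleton] at hdvd
    obtain ⟨c, hc⟩ := hM.2.2 d x ⟨_, hdvd, ⟨_, rfl⟩⟩
    obtain ⟨u, hu⟩ := hc.2 _ ⟨hdvd, ⟨_, rfl⟩⟩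
    obtain ⟨⟨⟨s, hs⟩, ⟨w, hw⟩⟩, -⟩ := id hc
    rcases hcc d hd x hx c w hc hw with hwE | rfl
    · obtain ⟨t, ht⟩ := ih hinit hwE
        ⟨u, hM.1 _ _ x (by rw [hu, hw, mul_assoc])⟩
      exact htri d hd ⟨t * s, by rw [ht, mul_assoc, ← hw, hs, mul_assoc]⟩
    · exact ⟨s, by rw [← hs, hw, one_mul]⟩

/-- Let `M` be a left locally Gaussian monoid and `E ⊆ M∖{1}` a generating set closed
under llcm and left-complement. Let `x ≠ 1` have `E`-normal form `x_p⋯x_1` and let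
`a ∈ E`, with `NF(x·a) = y_q⋯y_1`. Then either `x_1·a = y_1`, or there is `z ∈ E` such
that `(z, y_1)` is `E`-normal with `z·y_1 = x_1·a` (i.e. `NF(x_1·a) = z·y_1`). -/
theorem last_letter_of_normalForm_mul_generator
    {M : Type*} [Monoid M] (hM : LeftLocallyGaussian M)
    (E : Set M) (h1 : (1 : M) ∉ E) (hgen : IsGenSet E)
    (hcl : ClosedLLCM E) (hcc : ClosedLComp E)
    (x : M) (hx : x ≠ 1) (l : List M) (x1 : M)
    (hnf : ENormalSeq E (l ++ [x1])) (hprod : (l ++ [x1]).prod = x)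
    (a : M) (ha : a ∈ E)
    (m : List M) (y1 : M)
    (hnf' : ENormalSeq E (m ++ [y1])) (hprod' : (m ++ [y1]).prod = x * a) :
    x1 * a = y1 ∨ ∃ z ∈ E, ENormalSeq E [z, y1] ∧ z * y1 = x1 * a := by
  have hx1 : x1 ∈ E := hnf.1 x1 (by simp)
  have hy1 : y1 ∈ E := hnf'.1 y1 (by simp)
  have hlast : ∀ d ∈ E, RDvd d (x * a) → RDvd d y1 := fun d hd hdvd =>
    hnf'.rdvd_last hM hcc hd (hprod' ▸ hdvd)
  obtain ⟨w, rfl⟩ := hlast a ha ⟨x, rfl⟩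
  have hwx : RDvd w x := by
    refine ⟨m.prod, hM.1 _ _ a ?_⟩
    rw [← hprod', List.prod_append, List.prod_singleton, mul_assoc]
  obtain ⟨v, hvw, hv⟩ : ∃ v, x1 = v * w ∧ (v ∈ E ∨ v = 1) := by
    rcases hcc.quotient_mem ha hy1 with hw | rfl
    · obtain ⟨v, rfl⟩ := hnf.rdvd_last hM hcc hw (hprod.symm ▸ hwx)
      exact ⟨v, rfl, hcc.quotient_mem hw hx1⟩
    · exact ⟨x1, (mul_one _).symm, Or.inl hx1⟩
  rcases hv with hv | rfl
  · refine Or.inr ⟨v, hv, ⟨by simp [hv, hy1], ?_⟩, by rw [hvw, mul_assoc]⟩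
    refine List.isChain_pair.2 fun d hd ⟨t, ht⟩ => hlast d hd ⟨l.prod * t, ?_⟩
    rw [← hprod, List.prod_append, List.prod_singleton, hvw, mul_assoc, mul_assoc, ht, mul_assoc]
  · exact Or.inl (by rw [hvw, one_mul])
end

section
/- Let M be a left locally Gaussian monoid, and let x, y ∈ M admit a common left-multiple with least common left-multiple a·x = b·y. Then for every z ∈ M, the elements x·z and y·z admit a least common left-multiple, and it is equal to a·x·z. -/
/-- Let `M` be a left locally Gaussian monoid and let `x, y ∈ M` admit a common
left-multiple, with least common left-multiple `a·x = b·y`. Then for every `z ∈ M`,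
the elements `x·z` and `y·z` admit a least common left-multiple, equal to `a·x·z`. -/
theorem llcm_mul_right
    {M : Type*} [Monoid M] (hM : LeftLocallyGaussian M)
    (x y a b : M) (hab : a * x = b * y) (hlcm : IsLLCM x y (a * x)) (z : M) :
    IsLLCM (x * z) (y * z) (a * x * z) := by
  refine ⟨⟨⟨a, mul_assoc a x z⟩, ⟨b, by rw [hab, mul_assoc]⟩⟩, ?_⟩
  rintro d ⟨⟨u, hu⟩, ⟨v, hv⟩⟩
  have huv : u * x = v * y :=
    hM.1 _ _ z (by rw [mul_assoc, mul_assoc, ← hu, ← hv])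
  obtain ⟨w, hw⟩ := hlcm.2 (u * x) ⟨⟨u, rfl⟩, ⟨v, huv⟩⟩
  exact ⟨w, by rw [hu, ← mul_assoc, hw, mul_assoc w]⟩
end
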